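/- Write 𝓑 = {n₁ < n₂ < ... < n_d} ⊂ {1,...,N}, set n₀ = 0 and n_{d+1} = ∞, and let 𝓔 be the σ-algebra generated by {X_n : n ∈ 𝓑}. Then for almost every realization of 𝓔: (i) the families of random variables {X_n : n_s < n < n_{s+1}}, s = 0,...,d, are conditionally independent given 𝓔; and (ii) if n and n+1 belong to the same block (n_s, n_{s+1}), then P(X_{n+1} ∈ A | X_n = x, 𝓔) = ∫_A p_{n,𝓔}(x,y) dμ_{n+1,𝓔}(y), where μ_{n+1,𝓔} is the conditional law of X_{n+1} given 𝓔 and the conditional transition densities satisfy C^{-6} ≤ p_{n,𝓔}(x,y) ≤ C^6. In particular, conditioned on 𝓔, each block {X_n : n_s < n < n_{s+1}} forms a uniformly elliptic Markov chain with ellipticity constant C^6. -/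

import Mathlib

open MeasureTheory ProbabilityTheory Filter Finset
open scoped ENNReal Topology

noncomputable section

namespace EdgeworthMC

variable {Ω E : Type*} [MeasurableSpace Ω] [MeasurableSpace E]

/-- The standard Gaussian density `𝔤(u) = (2π)^{-1/2} e^{-u²/2}`. -/
def gaussDensity (u : ℝ) : ℝ := (Real.sqrt (2 * Real.pi))⁻¹ * Real.exp (-u ^ 2 / 2)

/-- `UEChain μ X κ C` : the process `X` is a Markov chain (with respect to the probability
measure `μ`) with transition kernels `κ n` from the state at time `n` to the state at time
`n+1`, and the chain is uniformly elliptic with ellipticity constant `C`: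
`C⁻¹ ℙ(X_{n+1} ∈ A) ≤ ℙ(X_{n+1} ∈ A | X_n = x) ≤ C ℙ(X_{n+1} ∈ A)` for a.e. `x`. -/
def UEChain (μ : Measure Ω) (X : ℕ → Ω → E) (κ : ℕ → Kernel E E) (C : ℝ) : Prop :=
  IsProbabilityMeasure μ ∧
  (∀ n, Measurable (X n)) ∧
  (∀ n, IsMarkovKernel (κ n)) ∧
  (∀ n (A : Set E), MeasurableSet A →
      (μ[fun ω => A.indicator (fun _ => (1 : ℝ)) (X (n + 1) ω) |
          ⨆ i : Fin (n + 1), MeasurableSpace.comap (X i) (inferInstance : MeasurableSpace E)]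
        =ᵐ[μ] fun ω => (κ n (X n ω) A).toReal)) ∧
  (∀ n (A : Set E), MeasurableSet A → ∀ᵐ ω ∂μ,
      κ n (X n ω) A ≤ ENNReal.ofReal C * Measure.map (X (n + 1)) μ A ∧
      Measure.map (X (n + 1)) μ A ≤ ENNReal.ofReal C * κ n (X n ω) A)

/-- Partial sums `S_N = ∑_{n=1}^N f_n(X_n)`. -/
def S (X : ℕ → Ω → E) (f : ℕ → E → ℤ) (N : ℕ) (ω : Ω) : ℤ :=
  ∑ n ∈ Finset.Icc 1 N, f n (X n ω)

/-- `V_N = Var(S_N)`. -/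
def VN (μ : Measure Ω) (X : ℕ → Ω → E) (f : ℕ → E → ℤ) (N : ℕ) : ℝ :=
  variance (fun ω => ((S X f N ω : ℝ))) μ

/-- `σ_N = √V_N`. -/
def sigN (μ : Measure Ω) (X : ℕ → Ω → E) (f : ℕ → E → ℤ) (N : ℕ) : ℝ :=
  Real.sqrt (VN μ X f N)

/-- `a_N = 𝔼(S_N)`. -/
def meanS (μ : Measure Ω) (X : ℕ → Ω → E) (f : ℕ → E → ℤ) (N : ℕ) : ℝ :=
  ∫ ω, ((S X f N ω : ℝ)) ∂μ

/-- The second largest value among the (finitely many) values of `p`, counted with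
multiplicity: it equals `min_j max_{j' ≠ j} p j'`. -/
def secondLargest {ι : Type*} (p : ι → ℝ) : ℝ := ⨅ j, sSup (p '' {j}ᶜ)

/-- `q_n(m)` : the second largest value among `ℙ(Y_n ≡ j mod m)`, `j = 0,…,m-1`. -/
def qres (μ : Measure Ω) (X : ℕ → Ω → E) (f : ℕ → E → ℤ) (n m : ℕ) : ℝ :=
  secondLargest (fun j : ZMod m => (μ {ω | ((f n (X n ω) : ZMod m)) = j}).toReal)

/-- `M_N = min_{2 ≤ m ≤ 2K} ∑_{n=1}^N q_n(m)`. -/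
def MN (μ : Measure Ω) (X : ℕ → Ω → E) (f : ℕ → E → ℤ) (K N : ℕ) : ℝ :=
  sInf ((fun m => ∑ n ∈ Finset.Icc 1 N, qres μ X f n m) '' (Set.Icc 2 (2 * K)))

/-- `S_N` obeys the Edgeworth expansion of order `r` : there are polynomials `P_{b,N}`,
with coefficients uniformly bounded in `N` and degrees not depending on `N`, such that
uniformly in `k ∈ ℤ`,
`ℙ(S_N = k) = ∑_{b=1}^r σ_N^{-b} P_{b,N}(k_N) 𝔤(k_N) + o(σ_N^{-r})`
where `k_N = (k - 𝔼 S_N)/σ_N`. -/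
def Edgeworth (μ : Measure Ω) (X : ℕ → Ω → E) (f : ℕ → E → ℤ) (r : ℕ) : Prop :=
  ∃ (D : ℕ) (Cb : ℝ) (P : ℕ → ℕ → Polynomial ℝ),
    (∀ b N, (P b N).natDegree ≤ D) ∧
    (∀ b N i, |(P b N).coeff i| ≤ Cb) ∧
    ∀ ε > 0, ∃ N₀, ∀ N ≥ N₀, ∀ k : ℤ,
      |(μ {ω | S X f N ω = k}).toReal -
          ∑ b ∈ Finset.Icc 1 r, (sigN μ X f N)⁻¹ ^ b *
            (P b N).eval (((k : ℝ) - meanS μ X f N) / sigN μ X f N) *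
            gaussDensity (((k : ℝ) - meanS μ X f N) / sigN μ X f N)|
        ≤ ε * (sigN μ X f N)⁻¹ ^ r

/-- The σ-algebra generated by `X_{j 1}, …, X_{j ℓ}`. -/
def sigmaOf (X : ℕ → Ω → E) {ℓ : ℕ} (j : Fin ℓ → ℕ) : MeasurableSpace Ω :=
  ⨆ i : Fin ℓ, MeasurableSpace.comap (X (j i)) (inferInstance : MeasurableSpace E)

/-- Conditional probability of the event `s` given the σ-algebra `m`. -/
def condProb (μ : Measure Ω) (m : MeasurableSpace Ω) (s : Set Ω) : Ω → ℝ :=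
  μ[s.indicator (fun _ => (1 : ℝ)) | m]

/-- `S_N` obeys the Edgeworth expansion of order `r` in a conditionally stable way:
for every `ℓ`, the order `r` Edgeworth expansion holds for the conditional law of `S_N`
given `X_{j_1},…,X_{j_ℓ}`, with error term `o_ℓ(σ_N^{-r})` and polynomial coefficient
bounds depending only on `ℓ` (and `r`), uniformly over all choices of indices
`1 ≤ j_1,…,j_ℓ ≤ N`. -/
def CondStableEdgeworth (μ : Measure Ω) (X : ℕ → Ω → E) (f : ℕ → E → ℤ) (r : ℕ) : Prop :=
  ∀ ℓ : ℕ, ∃ (D : ℕ) (Cb : ℝ), ∀ ε > 0, ∃ N₀, ∀ N ≥ N₀,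
    ∀ j : Fin ℓ → ℕ, (∀ i, j i ∈ Finset.Icc 1 N) →
      ∃ P : ℕ → Ω → Polynomial ℝ,
        (∀ b ω, (P b ω).natDegree ≤ D) ∧
        (∀ b ω i, |(P b ω).coeff i| ≤ Cb) ∧
        ∀ᵐ ω ∂μ, ∀ k : ℤ,
          |condProb μ (sigmaOf X j) {ω' | S X f N ω' = k} ω -
              ∑ b ∈ Finset.Icc 1 r, (sigN μ X f N)⁻¹ ^ b *
                (P b ω).eval (((k : ℝ) -
                    (μ[fun ω' => ((S X f N ω' : ℝ)) | sigmaOf X j]) ω) / sigN μ X f N) *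
                gaussDensity (((k : ℝ) -
                    (μ[fun ω' => ((S X f N ω' : ℝ)) | sigmaOf X j]) ω) / sigN μ X f N)|
            ≤ ε * (sigN μ X f N)⁻¹ ^ r

/-- `t` is a resonant point: `t = 2πl/m` with `0 < m ≤ 2K`, `0 ≤ l < m`. -/
def IsResonant (K : ℕ) (t : ℝ) : Prop :=
  ∃ l m : ℕ, 0 < m ∧ m ≤ 2 * K ∧ l < m ∧ t = 2 * Real.pi * l / m

/-- The conditional characteristic function `𝔼[e^{itS_N} | X_{j_1},…,X_{j_ℓ}]`. -/
def condChar (μ : Measure Ω) (X : ℕ → Ω → E) (f : ℕ → E → ℤ) (t : ℝ) (N : ℕ)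
    {ℓ : ℕ} (j : Fin ℓ → ℕ) : Ω → ℂ :=
  μ[fun ω => Complex.exp (Complex.I * (t : ℂ) * ((S X f N ω : ℤ) : ℂ)) | sigmaOf X j]

end EdgeworthMC

namespace EdgeworthMC

variable {Ω E : Type*} [MeasurableSpace Ω] [MeasurableSpace E]

/-- The left endpoint `n_s` of the block `(n_s, n_{s+1})` (with `n_0 = 0`). -/
def blockLower {d : ℕ} (nn : Fin d → ℕ) (s : Fin (d + 1)) : ℕ :=
  if h : 0 < (s : ℕ) then nn ⟨(s : ℕ) - 1, by have := s.isLt; omega⟩ else 0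

/-- The right endpoint `n_{s+1}` of the block `(n_s, n_{s+1})` (with `n_{d+1} = ∞`). -/
def blockUpper {d : ℕ} (nn : Fin d → ℕ) (s : Fin (d + 1)) : WithTop ℕ :=
  if h : (s : ℕ) < d then ((nn ⟨(s : ℕ), h⟩ : ℕ) : WithTop ℕ) else ⊤

/-- The block `(n_s, n_{s+1}) = {m : n_s < m < n_{s+1}}` of indices strictly between two
consecutive elements of `𝓑 = {n_1 < ⋯ < n_d}`. -/
def blockSet {d : ℕ} (nn : Fin d → ℕ) (s : Fin (d + 1)) : Set ℕ :=
  {m : ℕ | blockLower nn s < m ∧ ((m : ℕ) : WithTop ℕ) < blockUpper nn s}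

/-- The σ-algebra generated by the variables of the block `(n_s, n_{s+1})`. -/
def blockSigma (X : ℕ → Ω → E) {d : ℕ} (nn : Fin d → ℕ) (s : Fin (d + 1)) :
    MeasurableSpace Ω :=
  ⨆ n ∈ blockSet nn s, MeasurableSpace.comap (X n) (inferInstance : MeasurableSpace E)

end EdgeworthMC

/-!
In Doob's form, the Markov property says that `X_n` screens off the past from the future: adding the
past to the conditioning does not change the conditional probability of a future event. Conditional
independence in this form obeys the usual graphoid rules (symmetry, contraction, weak union). By
these rules the endpoints of a block screen the block off from everything outside it; conditioning
on the other points of `𝓑` preserves this, and the factorization over the blocks follows.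

Ellipticity says that `X_{n+1}` is independent of the past up to a factor `C`; by the Markov
property the same holds for the past and the whole future of `X_n`. On rectangles, three such
comparisons show that `X_{n+1}` is independent of all the other variables together up to a factor
`C³`. The conditional probabilities of `X_{n+1} ∈ A` given `𝓔` and given `X_n, 𝓔` are thus both
within a factor `C³` of `ℙ(X_{n+1} ∈ A)`, hence within a factor `C⁶` of each other.
-/

namespace EdgeworthMC

section Rectangles

variable {Ω : Type*} {m m₁ m₂ mΩ : MeasurableSpace Ω} {μ : Measure Ω} {f g : Ω → ℝ}

lemma norm_setIntegral_sub_setIntegral_le (hf : Integrable f μ) {s t : Set Ω}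
    (hs : MeasurableSet s) (ht : MeasurableSet t) :
    ‖∫ ω in s, f ω ∂μ - ∫ ω in t, f ω ∂μ‖ ≤ ∫ ω in symmDiff s t, ‖f ω‖ ∂μ := by
  rw [← integral_indicator hs, ← integral_indicator ht, ← integral_indicator (hs.symmDiff ht),
    ← integral_sub (hf.indicator hs) (hf.indicator ht)]
  refine norm_integral_le_of_norm_le (hf.norm.indicator (hs.symmDiff ht)) (ae_of_all _ fun ω => ?_)
  by_cases h : ω ∈ s <;> by_cases h' : ω ∈ t <;> simp [Set.mem_symmDiff, h, h']

lemma setIntegral_nonneg_of_mem_supClosure {C : Set (Set Ω)} (hC : IsSetSemiring C)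
    (hCm : ∀ s ∈ C, MeasurableSet s) (hf : Integrable f μ)
    (h : ∀ s ∈ C, 0 ≤ ∫ ω in s, f ω ∂μ) {s : Set Ω} (hs : s ∈ supClosure C) :
    0 ≤ ∫ ω in s, f ω ∂μ := by
  obtain ⟨P, hP⟩ := hC.mem_supClosure_iff.1 hs
  rw [← P.sup_parts, Finset.sup_set_eq_biUnion,
    integral_biUnion_finset (s := id) _ (fun t ht => hCm t (hP ht)) P.disjoint
      fun _ _ => hf.integrableOn]
  exact Finset.sum_nonneg fun t ht => h t (hP ht)

lemma measureDense_supClosure {C : Set (Set Ω)} (hC : IsSetSemiring C) (huniv : Set.univ ∈ C)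
    (hgen : mΩ = MeasurableSpace.generateFrom C) [IsFiniteMeasure μ] :
    μ.MeasureDense (supClosure C) := by
  have hring := hC.isSetRing_supClosure
  have halg : IsSetAlgebra (supClosure C) :=
    { empty_mem := hring.empty_mem
      compl_mem := fun t ht => Set.compl_eq_univ_sdiff t ▸
        hring.sdiff_mem (subset_supClosure huniv) ht
      union_mem := hring.union_mem }
  refine Measure.MeasureDense.of_generateFrom_isSetAlgebra_finite μ halg (hgen.trans ?_)
  exact le_antisymm (MeasurableSpace.generateFrom_mono subset_supClosure)
    (MeasurableSpace.generateFrom_le fun _ => measurableSet_generateFrom_of_mem_supClosure)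

-- Finite disjoint unions of sets of `C` are dense for the finite measure `‖f‖ μ`.
lemma setIntegral_nonneg_of_isSetSemiring {C : Set (Set Ω)} (hC : IsSetSemiring C)
    (huniv : Set.univ ∈ C) (hCm : ∀ s ∈ C, MeasurableSet s) (hf : Integrable f μ)
    (h : ∀ s ∈ C, 0 ≤ ∫ ω in s, f ω ∂μ) {s : Set Ω}
    (hs : MeasurableSet[MeasurableSpace.generateFrom C] s) : 0 ≤ ∫ ω in s, f ω ∂μ := by
  have hle : MeasurableSpace.generateFrom C ≤ mΩ := MeasurableSpace.generateFrom_le hCm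
  have : IsFiniteMeasure (μ.withDensity fun ω => ‖f ω‖ₑ) := isFiniteMeasure_withDensity hf.2.ne
  have : IsFiniteMeasure ((μ.withDensity fun ω => ‖f ω‖ₑ).trim hle) := isFiniteMeasure_trim hle
  have hdense : @Measure.MeasureDense Ω (MeasurableSpace.generateFrom C)
      ((μ.withDensity fun ω => ‖f ω‖ₑ).trim hle) (supClosure C) :=
    @measureDense_supClosure Ω (MeasurableSpace.generateFrom C) _ C hC huniv rfl _
  by_contra! hneg
  obtain ⟨t, ht, hst⟩ := @Measure.MeasureDense.approx Ω (MeasurableSpace.generateFrom C) _ _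
    hdense s hs (measure_ne_top _ _) _ (neg_pos.2 hneg)
  have htm := measurableSet_generateFrom_of_mem_supClosure ht
  rw [trim_measurableSet_eq hle (hs.symmDiff htm), withDensity_apply _ (hle _ (hs.symmDiff htm)),
    ← ofReal_integral_norm_eq_lintegral_enorm hf.integrableOn,
    ENNReal.ofReal_lt_ofReal_iff (neg_pos.2 hneg)] at hst
  have hnonneg := setIntegral_nonneg_of_mem_supClosure hC hCm hf h ht
  have hsub := norm_setIntegral_sub_setIntegral_le hf (hle s hs) (hle t htm)
  rw [Real.norm_eq_abs] at hsub
  linarith [neg_abs_le (∫ ω in s, f ω ∂μ - ∫ ω in t, f ω ∂μ)]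

/-- The intersections of an `m₁`-measurable set and an `m₂`-measurable set: a semiring of sets
generating `m₁ ⊔ m₂`. -/
def rectangles (m₁ m₂ : MeasurableSpace Ω) : Set (Set Ω) :=
  Set.image2 (· ∩ ·) {s | MeasurableSet[m₁] s} {t | MeasurableSet[m₂] t}

lemma isSetSemiring_rectangles : IsSetSemiring (rectangles m₁ m₂) where
  empty_mem := ⟨∅, @MeasurableSet.empty _ m₁, ∅, @MeasurableSet.empty _ m₂, Set.inter_self ∅⟩
  inter_mem := by
    rintro _ ⟨s, hs, t, ht, rfl⟩ _ ⟨s', hs', t', ht', rfl⟩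
    exact ⟨s ∩ s', hs.inter hs', t ∩ t', ht.inter ht', Set.inter_inter_inter_comm s s' t t'⟩
  sdiff_eq_sUnion' := by
    classical
    rintro _ ⟨s, hs, t, ht, rfl⟩ _ ⟨s', hs', t', ht', rfl⟩
    refine ⟨{s \ s' ∩ t, s ∩ s' ∩ (t \ t')}, ?_, ?_, ?_⟩
    · rw [Finset.coe_pair, Set.pair_subset_iff]
      exact ⟨⟨s \ s', hs.diff hs', t, ht, rfl⟩, ⟨s ∩ s', hs.inter hs', t \ t', ht.diff ht', rfl⟩⟩
    · rw [Finset.coe_pair]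
      exact Set.pairwise_pair_of_symm.2 fun _ => Set.disjoint_left.2 fun _ hω hω' =>
        hω.1.2 hω'.1.2
    · rw [Finset.coe_pair, Set.sUnion_pair]
      ext ω
      simp only [Set.mem_sdiff, Set.mem_inter_iff, Set.mem_union]
      tauto

lemma generateFrom_rectangles :
    MeasurableSpace.generateFrom (rectangles m₁ m₂) = m₁ ⊔ m₂ := by
  apply le_antisymm
  · refine MeasurableSpace.generateFrom_le ?_
    rintro _ ⟨s, hs, t, ht, rfl⟩
    exact MeasurableSet.inter ((le_sup_left : m₁ ≤ m₁ ⊔ m₂) s hs)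
      ((le_sup_right : m₂ ≤ m₁ ⊔ m₂) t ht)
  · exact sup_le
      (fun s hs => MeasurableSpace.measurableSet_generateFrom
        ⟨s, hs, Set.univ, MeasurableSet.univ, Set.inter_univ s⟩)
      (fun t ht => MeasurableSpace.measurableSet_generateFrom
        ⟨Set.univ, MeasurableSet.univ, t, ht, Set.univ_inter t⟩)

lemma setIntegral_le_of_rectangles (h₁ : m₁ ≤ mΩ) (h₂ : m₂ ≤ mΩ) (hf : Integrable f μ)
    (hg : Integrable g μ)
    (h : ∀ s t, MeasurableSet[m₁] s → MeasurableSet[m₂] t →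
      ∫ ω in s ∩ t, f ω ∂μ ≤ ∫ ω in s ∩ t, g ω ∂μ)
    {r : Set Ω} (hr : MeasurableSet[m₁ ⊔ m₂] r) : ∫ ω in r, f ω ∂μ ≤ ∫ ω in r, g ω ∂μ := by
  have hsub : ∀ r, ∫ ω in r, (g - f) ω ∂μ = ∫ ω in r, g ω ∂μ - ∫ ω in r, f ω ∂μ := fun r =>
    integral_sub hg.integrableOn hf.integrableOn
  rw [← generateFrom_rectangles] at hr
  rw [← sub_nonneg, ← hsub]
  refine setIntegral_nonneg_of_isSetSemiring isSetSemiring_rectangles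
    ⟨Set.univ, MeasurableSet.univ, Set.univ, MeasurableSet.univ, Set.inter_self _⟩ ?_
    (hg.sub hf) ?_ hr
  · rintro _ ⟨s, hs, t, ht, rfl⟩
    exact (h₁ s hs).inter (h₂ t ht)
  · rintro _ ⟨s, hs, t, ht, rfl⟩
    rw [hsub, sub_nonneg]
    exact h s t hs ht

end Rectangles

section CondExp

variable {Ω : Type*} {m M m₁ m₂ mΩ : MeasurableSpace Ω} {μ : Measure Ω} [IsFiniteMeasure μ]
  {f g : Ω → ℝ}

lemma condExp_ae_le_condExp_iff (hm : m ≤ mΩ) (hf : Integrable f μ) (hg : Integrable g μ) :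
    μ[f | m] ≤ᵐ[μ] μ[g | m] ↔
      ∀ t, MeasurableSet[m] t → ∫ ω in t, f ω ∂μ ≤ ∫ ω in t, g ω ∂μ := by
  constructor
  · intro h t ht
    rw [← setIntegral_condExp hm hf ht, ← setIntegral_condExp hm hg ht]
    exact setIntegral_mono_ae integrable_condExp.integrableOn integrable_condExp.integrableOn h
  · intro h
    refine ae_le_of_ae_le_trim (hm := hm) (ae_le_of_forall_setIntegral_le
      (integrable_condExp.trim hm stronglyMeasurable_condExp)
      (integrable_condExp.trim hm stronglyMeasurable_condExp) fun t ht _ => ?_)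
    rw [← setIntegral_trim hm stronglyMeasurable_condExp ht,
      ← setIntegral_trim hm stronglyMeasurable_condExp ht, setIntegral_condExp hm hf ht,
      setIntegral_condExp hm hg ht]
    exact h t ht

lemma condExp_ae_eq_of_rectangles (h₁ : m₁ ≤ mΩ) (h₂ : m₂ ≤ mΩ) (hf : Integrable f μ)
    (hg : Integrable g μ)
    (h : ∀ s t, MeasurableSet[m₁] s → MeasurableSet[m₂] t →
      ∫ ω in s ∩ t, f ω ∂μ = ∫ ω in s ∩ t, g ω ∂μ) :
    μ[f | m₁ ⊔ m₂] =ᵐ[μ] μ[g | m₁ ⊔ m₂] :=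
  EventuallyLE.antisymm
    ((condExp_ae_le_condExp_iff (sup_le h₁ h₂) hf hg).2 fun _ hr =>
      setIntegral_le_of_rectangles h₁ h₂ hf hg (fun s t hs ht => (h s t hs ht).le) hr)
    ((condExp_ae_le_condExp_iff (sup_le h₁ h₂) hg hf).2 fun _ hr =>
      setIntegral_le_of_rectangles h₁ h₂ hg hf (fun s t hs ht => (h s t hs ht).ge) hr)

lemma condExp_ae_eq_of_stronglyMeasurable (hm : m ≤ M) (hM : M ≤ mΩ) (hg : StronglyMeasurable[m] g)
    (h : μ[f | M] =ᵐ[μ] g) : μ[f | M] =ᵐ[μ] μ[f | m] :=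
  calc μ[f | M] =ᵐ[μ] g := h
    _ = μ[g | m] := (condExp_of_stronglyMeasurable (hm.trans hM) hg
        (integrable_condExp.congr h)).symm
    _ =ᵐ[μ] μ[μ[f | M] | m] := condExp_congr_ae h.symm
    _ =ᵐ[μ] μ[f | m] := condExp_condExp_of_le hm hM

lemma condExp_ae_eq_of_between (h : m ≤ m₁) (h₁ : m₁ ≤ m₂) (h₂ : m₂ ≤ mΩ)
    (hf : μ[f | m₂] =ᵐ[μ] μ[f | m]) : μ[f | m₁] =ᵐ[μ] μ[f | m] :=
  calc μ[f | m₁] =ᵐ[μ] μ[μ[f | m₂] | m₁] := (condExp_condExp_of_le h₁ h₂).symm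
    _ =ᵐ[μ] μ[μ[f | m] | m₁] := condExp_congr_ae hf
    _ = μ[f | m] := condExp_of_stronglyMeasurable (h₁.trans h₂)
        (stronglyMeasurable_condExp.mono h) integrable_condExp

lemma condExp_mul_of_condExp_ae_eq (hmM : m ≤ M) (hM : M ≤ mΩ) (h : μ[f | M] =ᵐ[μ] μ[f | m])
    (hg : StronglyMeasurable[M] g) (hf : Integrable f μ) (hgi : Integrable g μ)
    (hfg : Integrable (f * g) μ) : μ[f * g | m] =ᵐ[μ] μ[f | m] * μ[g | m] := by
  have hpull : μ[f * g | M] =ᵐ[μ] μ[f | m] * g :=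
    (condExp_mul_of_stronglyMeasurable_right hg hfg hf).trans (h.mul (EventuallyEq.refl _ g))
  calc μ[f * g | m] =ᵐ[μ] μ[μ[f * g | M] | m] := (condExp_condExp_of_le hmM hM).symm
    _ =ᵐ[μ] μ[μ[f | m] * g | m] := condExp_congr_ae hpull
    _ =ᵐ[μ] μ[f | m] * μ[g | m] := condExp_mul_of_stronglyMeasurable_left
        stronglyMeasurable_condExp (integrable_condExp.congr hpull) hgi

end CondExp

section ScreensOff

variable {Ω : Type*} {m m' m₁ m₂ m₃ m₁' m₂' mΩ : MeasurableSpace Ω} {μ : Measure Ω}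

lemma indicator_one_mul (f : Ω → ℝ) (s : Set Ω) :
    s.indicator (fun _ => (1 : ℝ)) * f = s.indicator f := by
  ext ω
  by_cases h : ω ∈ s <;> simp [h]

lemma integrable_indicator_one [IsFiniteMeasure μ] {s : Set Ω} (hs : MeasurableSet s) :
    Integrable (s.indicator fun _ => (1 : ℝ)) μ :=
  (integrable_const 1).indicator hs

lemma stronglyMeasurable_indicator_one {s : Set Ω} (hs : MeasurableSet[m] s) :
    StronglyMeasurable[m] (s.indicator fun _ => (1 : ℝ)) :=
  (@stronglyMeasurable_const _ _ m _ _).indicator hs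

lemma setIntegral_indicator_one {s : Set Ω} (hs : MeasurableSet s)
    (t : Set Ω) : ∫ ω in t, s.indicator (fun _ => (1 : ℝ)) ω ∂μ = μ.real (s ∩ t) := by
  rw [integral_indicator hs, Measure.restrict_restrict hs, setIntegral_one_eq_measureReal]

/-- `m` screens `m₁` off from `m₂`: the σ-algebras `m₁` and `m₂` are conditionally independent
given `m`. This is Doob's form of the notion, which unlike `ProbabilityTheory.CondIndep` does not
refer to a regular conditional probability and so needs no standard Borel space. -/
structure ScreensOff (μ : Measure Ω) (m m₁ m₂ : MeasurableSpace Ω) : Prop where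
  le : m ≤ mΩ
  le_left : m₁ ≤ mΩ
  le_right : m₂ ≤ mΩ
  condExp_indicator : ∀ s, MeasurableSet[m₁] s →
    μ[s.indicator fun _ => (1 : ℝ) | m ⊔ m₂] =ᵐ[μ] μ[s.indicator fun _ => (1 : ℝ) | m]

namespace ScreensOff

lemma contraction (h₂ : ScreensOff μ m m₁ m₂) (h₃ : ScreensOff μ (m ⊔ m₂) m₁ m₃) :
    ScreensOff μ m m₁ (m₂ ⊔ m₃) where
  le := h₂.le
  le_left := h₂.le_left
  le_right := sup_le h₂.le_right h₃.le_right
  condExp_indicator s hs := by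
    rw [← sup_assoc]
    exact (h₃.condExp_indicator s hs).trans (h₂.condExp_indicator s hs)

variable [IsFiniteMeasure μ]

lemma of_left_le (h₁ : m₁ ≤ m) (hm : m ≤ mΩ) (h₂ : m₂ ≤ mΩ) : ScreensOff μ m m₁ m₂ where
  le := hm
  le_left := h₁.trans hm
  le_right := h₂
  condExp_indicator s hs := by
    have hsm : StronglyMeasurable[m] (s.indicator fun _ => (1 : ℝ)) :=
      stronglyMeasurable_indicator_one (h₁ s hs)
    have hint : Integrable (s.indicator fun _ => (1 : ℝ)) μ :=
      integrable_indicator_one (hm s (h₁ s hs))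
    rw [condExp_of_stronglyMeasurable (sup_le hm h₂) (hsm.mono le_sup_left) hint,
      condExp_of_stronglyMeasurable hm hsm hint]

-- Both sides equal `μ[1_s | m] * μ[f | m]`, the left one because `1_s` is screened off from `f`.
lemma condExp_indicator_mul (h : ScreensOff μ m m₁ m₂) {s : Set Ω} (hs : MeasurableSet[m₁] s)
    {f : Ω → ℝ} (hfm : StronglyMeasurable[m ⊔ m₂] f) (hf : Integrable f μ) :
    μ[s.indicator f | m] =ᵐ[μ] μ[s.indicator (μ[f | m]) | m] := by
  have hmM : m ≤ m ⊔ m₂ := le_sup_left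
  have hM : m ⊔ m₂ ≤ mΩ := sup_le h.le h.le_right
  have hint := integrable_indicator_one (μ := μ) (h.le_left s hs)
  have hfactor : ∀ {g : Ω → ℝ}, StronglyMeasurable[m ⊔ m₂] g → Integrable g μ →
      μ[s.indicator g | m] =ᵐ[μ] μ[s.indicator (fun _ => (1 : ℝ)) | m] * μ[g | m] :=
    fun {g} hgm hg => indicator_one_mul g s ▸ condExp_mul_of_condExp_ae_eq hmM hM
      (h.condExp_indicator s hs) hgm hint hg
      (indicator_one_mul g s ▸ hg.indicator (h.le_left s hs))
  have hcond := hfactor (stronglyMeasurable_condExp.mono hmM) (integrable_condExp (f := f))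
  rw [condExp_of_stronglyMeasurable h.le stronglyMeasurable_condExp integrable_condExp] at hcond
  exact (hfactor hfm hf).trans hcond.symm

lemma condExp_eq (h : ScreensOff μ m m₁ m₂) {f : Ω → ℝ} (hfm : StronglyMeasurable[m ⊔ m₂] f)
    (hf : Integrable f μ) : μ[f | m ⊔ m₁] =ᵐ[μ] μ[f | m] := by
  have hrect : ∀ t s, MeasurableSet[m] t → MeasurableSet[m₁] s →
      ∫ ω in t ∩ s, f ω ∂μ = ∫ ω in t ∩ s, (μ[f | m]) ω ∂μ := fun t s ht hs => by
    have hsΩ := h.le_left s hs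
    have hfs : Integrable (s.indicator f) μ := hf.indicator hsΩ
    have hcs : Integrable (s.indicator (μ[f | m])) μ := integrable_condExp.indicator hsΩ
    rw [← setIntegral_indicator hsΩ, ← setIntegral_indicator hsΩ,
      ← setIntegral_condExp h.le hfs ht, ← setIntegral_condExp h.le hcs ht]
    exact integral_congr_ae (ae_restrict_of_ae (h.condExp_indicator_mul hs hfm hf))
  have hcond := condExp_ae_eq_of_rectangles h.le h.le_left hf integrable_condExp hrect
  rwa [condExp_of_stronglyMeasurable (sup_le h.le h.le_left)
    (stronglyMeasurable_condExp.mono le_sup_left) integrable_condExp] at hcond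

lemma symm (h : ScreensOff μ m m₁ m₂) : ScreensOff μ m m₂ m₁ where
  le := h.le
  le_left := h.le_right
  le_right := h.le_left
  condExp_indicator s hs := h.condExp_eq
    ((stronglyMeasurable_indicator_one hs).mono le_sup_right)
    (integrable_indicator_one (h.le_right s hs))

lemma mono_right (h : ScreensOff μ m m₁ m₂) (h₂ : m₂' ≤ m ⊔ m₂) : ScreensOff μ m m₁ m₂' where
  le := h.le
  le_left := h.le_left
  le_right := h₂.trans (sup_le h.le h.le_right)
  condExp_indicator s hs := condExp_ae_eq_of_between le_sup_left (sup_le le_sup_left h₂)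
    (sup_le h.le h.le_right) (h.condExp_indicator s hs)

lemma mono_left (h : ScreensOff μ m m₁ m₂) (h₁ : m₁' ≤ m ⊔ m₁) : ScreensOff μ m m₁' m₂ :=
  (h.symm.mono_right h₁).symm

lemma weak_union (h : ScreensOff μ m m₁ m₂) (hm : m ≤ m') (hm' : m' ≤ m ⊔ m₂) :
    ScreensOff μ m' m₁ m₂ where
  le := hm'.trans (sup_le h.le h.le_right)
  le_left := h.le_left
  le_right := h.le_right
  condExp_indicator s hs := by
    have hsup : m' ⊔ m₂ = m ⊔ m₂ :=
      le_antisymm (sup_le hm' le_sup_right) (sup_le_sup_right hm m₂)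
    rw [hsup]
    exact (h.condExp_indicator s hs).trans (condExp_ae_eq_of_between hm hm'
      (sup_le h.le h.le_right) (h.condExp_indicator s hs)).symm

lemma iSup_right {𝓕 : ℕ → MeasurableSpace Ω} (hmono : Monotone 𝓕)
    (h : ∀ k, ScreensOff μ m m₁ (𝓕 k)) : ScreensOff μ m m₁ (⨆ k, 𝓕 k) where
  le := (h 0).le
  le_left := (h 0).le_left
  le_right := iSup_le fun k => (h k).le_right
  condExp_indicator s hs := by
    let ℱ : Filtration ℕ mΩ :=
      { seq := fun k => m ⊔ 𝓕 k
        mono' := fun _ _ hij => sup_le_sup_left (hmono hij) m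
        le' := fun k => sup_le (h k).le (h k).le_right }
    have hlevy := tendsto_ae_condExp (ℱ := ℱ) (μ := μ) (s.indicator fun _ => (1 : ℝ))
    rw [sup_iSup]
    filter_upwards [hlevy, ae_all_iff.2 fun k => (h k).condExp_indicator s hs] with ω hω hconst
    exact tendsto_nhds_unique hω (tendsto_const_nhds.congr fun k => (hconst k).symm)

lemma of_endpoints {l u p q b e : MeasurableSpace Ω} (hl : l ≤ p) (hu : u ≤ q)
    (hp : ScreensOff μ l p (b ⊔ q)) (hq : ScreensOff μ u q (b ⊔ p)) (hlu : l ⊔ u ≤ e)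
    (he : e ≤ p ⊔ q) : ScreensOff μ e b (p ⊔ q) := by
  have hq' : ScreensOff μ (l ⊔ u) b q :=
    ((hq.weak_union le_sup_right (sup_le (hl.trans (le_sup_right.trans le_sup_right))
      le_sup_left)).mono_right (le_sup_left.trans le_sup_right)).symm
  have hp' : ScreensOff μ (l ⊔ u ⊔ q) b p := by
    rw [sup_assoc, sup_eq_right.2 hu]
    exact ((hp.weak_union le_sup_left (sup_le le_sup_left (le_sup_right.trans
      le_sup_right))).mono_right (le_sup_left.trans le_sup_right)).symm
  rw [sup_comm p q] at he ⊢
  exact (hq'.contraction hp').weak_union hlu (he.trans le_sup_right)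

end ScreensOff

section Products

variable [IsFiniteMeasure μ] {ι : Type*} {b : ι → MeasurableSpace Ω} {g : ι → Ω → ℝ}

lemma exists_norm_prod_le (hb : ∀ i, ∃ B, ∀ ω, |g i ω| ≤ B) (T : Finset ι) :
    ∃ B, ∀ ω, ‖(∏ i ∈ T, g i) ω‖ ≤ B := by
  choose B hB using hb
  refine ⟨∏ i ∈ T, B i, fun ω => ?_⟩
  rw [Finset.prod_apply, Real.norm_eq_abs, Finset.abs_prod]
  exact Finset.prod_le_prod (fun _ _ => abs_nonneg _) fun i _ => hB i ω

lemma condExp_prod_of_screensOff (hm : m ≤ mΩ) (h : ∀ t, ScreensOff μ m (b t) (⨆ s ≠ t, b s))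
    (hg : ∀ i, Measurable[b i] (g i)) (hb : ∀ i, ∃ B, ∀ ω, |g i ω| ≤ B) (T : Finset ι) :
    μ[∏ i ∈ T, g i | m] =ᵐ[μ] ∏ i ∈ T, μ[g i | m] := by
  classical
  induction T using Finset.induction_on with
  | empty =>
    rw [Finset.prod_empty, Finset.prod_empty]
    exact (condExp_const hm (1 : ℝ)).eventuallyEq
  | insert t T ht ih =>
    rw [Finset.prod_insert ht, Finset.prod_insert ht]
    have hgt : Integrable (g t) μ := by
      obtain ⟨B, hB⟩ := hb t
      exact Integrable.of_bound ((hg t).mono (h t).le_left le_rfl).aestronglyMeasurable B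
        (ae_of_all _ hB)
    have hT : StronglyMeasurable[m ⊔ ⨆ s ≠ t, b s] (∏ i ∈ T, g i) :=
      Finset.stronglyMeasurable_prod T fun i hi => by
        have hi' : b i ≤ ⨆ s ≠ t, b s := le_iSup₂_of_le i (ne_of_mem_of_not_mem hi ht) le_rfl
        exact (hg i).stronglyMeasurable.mono (hi'.trans le_sup_right)
    have hM := sup_le hm (h t).le_right
    have hTΩ : AEStronglyMeasurable (∏ i ∈ T, g i) μ := (hT.mono hM).aestronglyMeasurable
    obtain ⟨B, hB⟩ := exists_norm_prod_le hb T
    have hcond := (h t).symm.condExp_eq ((hg t).stronglyMeasurable.mono le_sup_right) hgt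
    exact (condExp_mul_of_condExp_ae_eq le_sup_left hM hcond hT hgt
      (Integrable.of_bound hTΩ B (ae_of_all _ hB)) (hgt.mul_bdd hTΩ (ae_of_all _ hB))).trans
      ((EventuallyEq.refl _ _).mul ih)

end Products

end ScreensOff

section QuasiIndep

variable {Ω : Type*} {m m' m₁ m₂ m₃ m₁' m₂' mΩ : MeasurableSpace Ω} {μ : Measure Ω} {K : ℝ}

lemma condExp_indicator_ae_le_iff [IsFiniteMeasure μ] (hm : m ≤ mΩ) {s : Set Ω}
    (hs : MeasurableSet s) {c : ℝ} :
    (∀ᵐ ω ∂μ, (μ[s.indicator fun _ => (1 : ℝ) | m]) ω ≤ c) ↔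
      ∀ t, MeasurableSet[m] t → μ.real (s ∩ t) ≤ c * μ.real t := by
  have hiff := condExp_ae_le_condExp_iff hm (integrable_indicator_one hs)
    (integrable_const (μ := μ) c)
  simp only [condExp_const hm, setIntegral_indicator_one hs, setIntegral_const, smul_eq_mul,
    mul_comm _ c] at hiff
  exact hiff

lemma ae_le_mul_condExp_indicator_iff [IsFiniteMeasure μ] (hm : m ≤ mΩ) {s : Set Ω}
    (hs : MeasurableSet s) {c : ℝ} :
    (∀ᵐ ω ∂μ, c ≤ K * (μ[s.indicator fun _ => (1 : ℝ) | m]) ω) ↔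
      ∀ t, MeasurableSet[m] t → c * μ.real t ≤ K * μ.real (s ∩ t) := by
  have hiff := condExp_ae_le_condExp_iff hm (integrable_const (μ := μ) c)
    ((integrable_indicator_one hs).smul K)
  rw [eventuallyLE_congr (EventuallyEq.refl _ _) (condExp_smul K _ m)] at hiff
  simp only [condExp_const hm, Pi.smul_apply, integral_const_mul, setIntegral_indicator_one hs,
    setIntegral_const, smul_eq_mul, mul_comm _ c] at hiff
  exact hiff

/-- Independence of `m₁` and `m₂` up to a factor `K`: on the rectangles `s ∩ t`, the measure `μ`
and the product of its marginals dominate each other with constant `K`. Both bounds are written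
without division, so that no positivity of `K` is built in. -/
def QuasiIndep (μ : Measure Ω) (K : ℝ) (m₁ m₂ : MeasurableSpace Ω) : Prop :=
  ∀ s t, MeasurableSet[m₁] s → MeasurableSet[m₂] t →
    μ.real (s ∩ t) ≤ K * (μ.real s * μ.real t) ∧ μ.real s * μ.real t ≤ K * μ.real (s ∩ t)

namespace QuasiIndep

lemma symm (h : QuasiIndep μ K m₁ m₂) : QuasiIndep μ K m₂ m₁ := fun s t hs ht => by
  rw [Set.inter_comm, mul_comm (μ.real s)]
  exact h t s ht hs

lemma mono (h : QuasiIndep μ K m₁ m₂) (h₁ : m₁' ≤ m₁) (h₂ : m₂' ≤ m₂) :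
    QuasiIndep μ K m₁' m₂' := fun s t hs ht => h s t (h₁ s hs) (h₂ t ht)

lemma measureReal_inter_bounds (hK : 0 ≤ K) (h₁₂ : QuasiIndep μ K m₁ m₂)
    (h₁₃ : QuasiIndep μ K m₁ m₃) (h : QuasiIndep μ K (m₁ ⊔ m₂) m₃) {r s t : Set Ω}
    (hr : MeasurableSet[m₁] r) (hs : MeasurableSet[m₂] s) (ht : MeasurableSet[m₃] t) :
    μ.real (s ∩ (r ∩ t)) ≤ K ^ 3 * (μ.real s * μ.real (r ∩ t)) ∧
      μ.real s * μ.real (r ∩ t) ≤ K ^ 3 * μ.real (s ∩ (r ∩ t)) := by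
  have hrs : MeasurableSet[m₁ ⊔ m₂] (r ∩ s) :=
    MeasurableSet.inter (le_sup_left (b := m₂) r hr) (le_sup_right (a := m₁) s hs)
  obtain ⟨hrst, hrst'⟩ := h _ t hrs ht
  obtain ⟨hrs, hrs'⟩ := h₁₂ r s hr hs
  obtain ⟨hrt, hrt'⟩ := h₁₃ r t hr ht
  rw [← Set.inter_assoc, Set.inter_comm s r]
  constructor
  · calc μ.real (r ∩ s ∩ t) ≤ K * (μ.real (r ∩ s) * μ.real t) := hrst
      _ ≤ K * (K * (μ.real r * μ.real s) * μ.real t) := by gcongr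
      _ = K ^ 2 * (μ.real s * (μ.real r * μ.real t)) := by ring
      _ ≤ K ^ 2 * (μ.real s * (K * μ.real (r ∩ t))) := by gcongr
      _ = K ^ 3 * (μ.real s * μ.real (r ∩ t)) := by ring
  · calc μ.real s * μ.real (r ∩ t) ≤ μ.real s * (K * (μ.real r * μ.real t)) := by gcongr
      _ = K * (μ.real r * μ.real s * μ.real t) := by ring
      _ ≤ K * (K * μ.real (r ∩ s) * μ.real t) := by gcongr
      _ = K ^ 2 * (μ.real (r ∩ s) * μ.real t) := by ring
      _ ≤ K ^ 2 * (K * μ.real (r ∩ s ∩ t)) := by gcongr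
      _ = K ^ 3 * μ.real (r ∩ s ∩ t) := by ring

variable [IsFiniteMeasure μ]

lemma iff_condExp (h₁ : m₁ ≤ mΩ) (h₂ : m₂ ≤ mΩ) :
    QuasiIndep μ K m₁ m₂ ↔ ∀ s, MeasurableSet[m₁] s → ∀ᵐ ω ∂μ,
      (μ[s.indicator fun _ => (1 : ℝ) | m₂]) ω ≤ K * μ.real s ∧
      μ.real s ≤ K * (μ[s.indicator fun _ => (1 : ℝ) | m₂]) ω := by
  have hiff : ∀ s, MeasurableSet[m₁] s → ((∀ᵐ ω ∂μ,
      (μ[s.indicator fun _ => (1 : ℝ) | m₂]) ω ≤ K * μ.real s ∧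
      μ.real s ≤ K * (μ[s.indicator fun _ => (1 : ℝ) | m₂]) ω) ↔
      ∀ t, MeasurableSet[m₂] t → μ.real (s ∩ t) ≤ K * (μ.real s * μ.real t) ∧
        μ.real s * μ.real t ≤ K * μ.real (s ∩ t)) := fun s hs => by
    rw [eventually_and, condExp_indicator_ae_le_iff h₂ (h₁ s hs),
      ae_le_mul_condExp_indicator_iff h₂ (h₁ s hs), ← forall₂_and]
    simp only [mul_assoc]
  exact ⟨fun h s hs => (hiff s hs).2 fun t => h s t hs, fun h s t hs => (hiff s hs).1 (h s hs) t⟩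

lemma sup_right_of_screensOff (h : QuasiIndep μ K m₁ m₂) (hs : ScreensOff μ m₂ m₁ m₃) :
    QuasiIndep μ K m₁ (m₂ ⊔ m₃) :=
  (iff_condExp hs.le_left (sup_le hs.le hs.le_right)).2 fun s hs₁ => by
    filter_upwards [(iff_condExp hs.le_left hs.le).1 h s hs₁, hs.condExp_indicator s hs₁]
      with ω hω hscreen
    rwa [hscreen]

lemma condExp_le_mul_condExp {s : Set Ω} (hm : m ≤ mΩ) (hm' : m' ≤ mΩ) (h₁ : m₁ ≤ mΩ)
    (hK : 0 ≤ K) (h : QuasiIndep μ K m₁ m) (h' : QuasiIndep μ K m₁ m')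
    (hs : MeasurableSet[m₁] s) :
    ∀ᵐ ω ∂μ, (μ[s.indicator fun _ => (1 : ℝ) | m]) ω ≤
      K ^ 2 * (μ[s.indicator fun _ => (1 : ℝ) | m']) ω := by
  filter_upwards [(iff_condExp h₁ hm).1 h s hs, (iff_condExp h₁ hm').1 h' s hs] with ω hω hω'
  calc (μ[s.indicator fun _ => (1 : ℝ) | m]) ω ≤ K * μ.real s := hω.1
    _ ≤ K * (K * (μ[s.indicator fun _ => (1 : ℝ) | m']) ω) := by gcongr; exact hω'.2
    _ = K ^ 2 * (μ[s.indicator fun _ => (1 : ℝ) | m']) ω := by ring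

lemma of_rectangles (h₁ : m₁ ≤ mΩ) (h₂ : m₂ ≤ mΩ) (h₃ : m₃ ≤ mΩ)
    (h : ∀ r s t, MeasurableSet[m₁] r → MeasurableSet[m₂] s → MeasurableSet[m₃] t →
      μ.real (s ∩ (r ∩ t)) ≤ K * (μ.real s * μ.real (r ∩ t)) ∧
      μ.real s * μ.real (r ∩ t) ≤ K * μ.real (s ∩ (r ∩ t))) :
    QuasiIndep μ K m₂ (m₁ ⊔ m₃) := fun s q hs hq => by
  have hint : Integrable (s.indicator fun _ => (1 : ℝ)) μ := integrable_indicator_one (h₂ s hs)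
  have hl : ∀ q, ∫ ω in q, s.indicator (fun _ => (1 : ℝ)) ω ∂μ = μ.real (s ∩ q) :=
    setIntegral_indicator_one (h₂ s hs)
  have hupper := setIntegral_le_of_rectangles h₁ h₃ hint (integrable_const (K * μ.real s))
    (r := q)
  have hlower := setIntegral_le_of_rectangles h₁ h₃ (integrable_const (μ.real s)) (hint.smul K)
    (r := q)
  simp only [Pi.smul_apply, integral_const_mul, setIntegral_const, smul_eq_mul, hl,
    mul_comm (μ.real _) (μ.real s)] at hupper hlower
  exact ⟨hupper (fun r t hr ht => (h r s t hr hs ht).1) hq,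
    hlower (fun r t hr ht => (h r s t hr hs ht).2) hq⟩

-- The three factors `K` split off `m₃`, separate `m₁` from `m₂`, and reassemble `m₁` with `m₃`.
lemma rotate (h₁ : m₁ ≤ mΩ) (h₂ : m₂ ≤ mΩ) (h₃ : m₃ ≤ mΩ) (hK : 0 ≤ K)
    (h₁₂ : QuasiIndep μ K m₁ m₂) (h₁₃ : QuasiIndep μ K m₁ m₃)
    (h : QuasiIndep μ K (m₁ ⊔ m₂) m₃) : QuasiIndep μ (K ^ 3) m₂ (m₁ ⊔ m₃) :=
  of_rectangles h₁ h₂ h₃ fun _ _ _ => measureReal_inter_bounds hK h₁₂ h₁₃ h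

end QuasiIndep

end QuasiIndep

section Chain

variable {Ω E : Type*} [MeasurableSpace E]

/-- The σ-algebra generated by `X_n`, `n ∈ T`. -/
abbrev timeSigma (X : ℕ → Ω → E) (T : Set ℕ) : MeasurableSpace Ω :=
  ⨆ n ∈ T, MeasurableSpace.comap (X n) (inferInstance : MeasurableSpace E)

lemma timeSigma_mono (X : ℕ → Ω → E) {T T' : Set ℕ} (h : T ⊆ T') :
    timeSigma X T ≤ timeSigma X T' :=
  biSup_mono h

lemma timeSigma_union (X : ℕ → Ω → E) (T T' : Set ℕ) :
    timeSigma X (T ∪ T') = timeSigma X T ⊔ timeSigma X T' := by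
  simp only [timeSigma, _root_.iSup_union]

lemma timeSigma_singleton (X : ℕ → Ω → E) (n : ℕ) :
    timeSigma X {n} = MeasurableSpace.comap (X n) inferInstance :=
  iSup_singleton

lemma timeSigma_range (X : ℕ → Ω → E) {ι : Type*} (j : ι → ℕ) :
    timeSigma X (Set.range j) = ⨆ i, MeasurableSpace.comap (X (j i)) inferInstance :=
  iSup_range

lemma timeSigma_Iic (X : ℕ → Ω → E) (n : ℕ) :
    timeSigma X (Set.Iic n) = ⨆ i : Fin (n + 1), MeasurableSpace.comap (X i) inferInstance := by
  rw [← timeSigma_range]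
  congr 1
  ext k
  simp only [Set.mem_Iic, Set.mem_range]
  exact ⟨fun h => ⟨⟨k, by omega⟩, rfl⟩, fun ⟨i, hi⟩ => by omega⟩

lemma timeSigma_Ici (X : ℕ → Ω → E) (n : ℕ) :
    timeSigma X (Set.Ici n) = ⨆ k, timeSigma X (Set.Icc n (n + k)) := by
  apply le_antisymm
  · refine iSup₂_le fun i hi => le_iSup_of_le (i - n) ?_
    have hi' : n ≤ i := hi
    exact le_iSup₂_of_le i ⟨hi', by omega⟩ le_rfl
  · exact iSup_le fun k => timeSigma_mono X Set.Icc_subset_Ici_self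

variable [mΩ : MeasurableSpace Ω]

lemma timeSigma_le {X : ℕ → Ω → E} (hX : ∀ n, Measurable (X n)) (T : Set ℕ) :
    timeSigma X T ≤ mΩ :=
  iSup₂_le fun n _ => (hX n).comap_le

variable {μ : Measure Ω} {X : ℕ → Ω → E} {κ : ℕ → Kernel E E} {C : ℝ} {n : ℕ}

namespace UEChain

lemma screensOff_step (h : UEChain μ X κ C) (n : ℕ) :
    ScreensOff μ (timeSigma X {n}) (timeSigma X {n + 1}) (timeSigma X (Set.Iic n)) := by
  obtain ⟨_, hX, _, hmarkov, -⟩ := h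
  have hn : timeSigma X {n} ≤ timeSigma X (Set.Iic n) := timeSigma_mono X (by simp)
  refine ⟨timeSigma_le hX _, timeSigma_le hX _, timeSigma_le hX _, fun s hs => ?_⟩
  rw [timeSigma_singleton] at hs
  obtain ⟨A, hA, rfl⟩ := hs
  rw [sup_eq_right.2 hn]
  refine condExp_ae_eq_of_stronglyMeasurable (g := fun ω => (κ n (X n ω) A).toReal) hn
    (timeSigma_le hX _) ?_ ?_
  · rw [timeSigma_singleton]
    exact (((κ n).measurable_coe hA).ennreal_toReal.comp
      (comap_measurable (X n))).stronglyMeasurable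
  · rw [timeSigma_Iic]
    exact hmarkov n A hA

lemma screensOff_Icc (h : UEChain μ X κ C) (n k : ℕ) :
    ScreensOff μ (timeSigma X {n}) (timeSigma X (Set.Iic n))
      (timeSigma X (Set.Icc n (n + k))) := by
  have : IsProbabilityMeasure μ := h.1
  have hle := timeSigma_le h.2.1
  induction k with
  | zero =>
    rw [add_zero, Set.Icc_self]
    exact (ScreensOff.of_left_le le_rfl (hle _) (hle _)).symm
  | succ k ih =>
    have hstep : ScreensOff μ (timeSigma X (Set.Icc n (n + k))) (timeSigma X (Set.Iic n))
        (timeSigma X {n + k + 1}) :=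
      ((h.screensOff_step (n + k)).weak_union (timeSigma_mono X (by simp))
        (le_sup_of_le_right (timeSigma_mono X Set.Icc_subset_Iic_self))).symm.mono_left
        (le_sup_of_le_right (timeSigma_mono X (Set.Iic_subset_Iic.2 (n.le_add_right k))))
    rw [← sup_eq_right.2 (timeSigma_mono X (by simp) :
      timeSigma X {n} ≤ timeSigma X (Set.Icc n (n + k)))] at hstep
    refine (ih.contraction hstep).mono_right (le_sup_of_le_right ?_)
    rw [← timeSigma_union]
    refine timeSigma_mono X fun i hi => ?_
    simp only [Set.mem_Icc, Set.mem_union, Set.mem_singleton_iff] at hi ⊢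
    omega

lemma screensOff_past_future (h : UEChain μ X κ C) (n : ℕ) :
    ScreensOff μ (timeSigma X {n}) (timeSigma X (Set.Iic n)) (timeSigma X (Set.Ici n)) := by
  have : IsProbabilityMeasure μ := h.1
  rw [timeSigma_Ici]
  exact ScreensOff.iSup_right (fun i j hij => timeSigma_mono X (Set.Icc_subset_Icc_right
    (by omega))) (h.screensOff_Icc n)

lemma quasiIndep_step (h : UEChain μ X κ C) (hC : 0 ≤ C) (n : ℕ) :
    QuasiIndep μ C (timeSigma X {n + 1}) (timeSigma X (Set.Iic n)) := by
  obtain ⟨_, hX, _, hmarkov, hell⟩ := h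
  refine (QuasiIndep.iff_condExp (timeSigma_le hX _) (timeSigma_le hX _)).2 fun s hs => ?_
  rw [timeSigma_singleton] at hs
  obtain ⟨A, hA, rfl⟩ := hs
  rw [timeSigma_Iic]
  filter_upwards [hmarkov n A hA, hell n A hA] with ω hω hω'
  rw [Measure.map_apply (hX _) hA] at hω'
  have hcond : (μ[(X (n + 1) ⁻¹' A).indicator fun _ => (1 : ℝ) |
      ⨆ i : Fin (n + 1), MeasurableSpace.comap (X i) inferInstance]) ω
        = (κ n (X n ω) A).toReal := hω
  have hupper := ENNReal.toReal_mono (by finiteness) hω'.1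
  have hlower := ENNReal.toReal_mono (by finiteness) hω'.2
  rw [ENNReal.toReal_mul, ENNReal.toReal_ofReal hC] at hupper hlower
  rw [hcond]
  exact ⟨hupper, hlower⟩

lemma quasiIndep_past_future (h : UEChain μ X κ C) (hC : 0 ≤ C) (n : ℕ) :
    QuasiIndep μ C (timeSigma X (Set.Iic n)) (timeSigma X (Set.Ici (n + 1))) := by
  have : IsProbabilityMeasure μ := h.1
  have hscreen := (h.screensOff_past_future (n + 1)).mono_left
    (le_sup_of_le_right (timeSigma_mono X (Set.Iic_subset_Iic.2 n.le_succ)))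
  exact ((h.quasiIndep_step hC n).symm.sup_right_of_screensOff hscreen).mono le_rfl le_sup_right

lemma quasiIndep_of_notMem (h : UEChain μ X κ C) (hC : 0 ≤ C) {T : Set ℕ} (hT : n + 1 ∉ T) :
    QuasiIndep μ (C ^ 3) (timeSigma X {n + 1}) (timeSigma X T) := by
  have : IsProbabilityMeasure μ := h.1
  have hle := timeSigma_le h.2.1
  have hpast : timeSigma X (Set.Iic n) ⊔ timeSigma X {n + 1} ≤ timeSigma X (Set.Iic (n + 1)) :=
    sup_le (timeSigma_mono X (Set.Iic_subset_Iic.2 n.le_succ)) (timeSigma_mono X (by simp))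
  have hfuture : timeSigma X (Set.Ici (n + 2)) ≤ timeSigma X (Set.Ici (n + 1)) :=
    timeSigma_mono X (Set.Ici_subset_Ici.2 (n + 1).le_succ)
  refine (QuasiIndep.rotate (hle _) (hle _) (hle _) hC (h.quasiIndep_step hC n).symm
    ((h.quasiIndep_past_future hC n).mono le_rfl hfuture)
    ((h.quasiIndep_past_future hC (n + 1)).mono hpast le_rfl)).mono le_rfl ?_
  rw [← timeSigma_union]
  refine timeSigma_mono X fun i hi => ?_
  have : i ≠ n + 1 := fun h => hT (h ▸ hi)
  simp only [Set.mem_union, Set.mem_Iic, Set.mem_Ici]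
  omega

lemma condExp_le_pow_six_mul_condExp (h : UEChain μ X κ C) (hC : 0 ≤ C) {T T' : Set ℕ}
    (hT : n + 1 ∉ T) (hT' : n + 1 ∉ T') {A : Set E} (hA : MeasurableSet A) :
    ∀ᵐ ω ∂μ, (μ[fun ω' => A.indicator (fun _ => (1 : ℝ)) (X (n + 1) ω') | timeSigma X T]) ω ≤
      C ^ 6 * (μ[fun ω' => A.indicator (fun _ => (1 : ℝ)) (X (n + 1) ω') | timeSigma X T']) ω := by
  have : IsProbabilityMeasure μ := h.1
  have hle := timeSigma_le h.2.1
  have hA' : MeasurableSet[timeSigma X {n + 1}] (X (n + 1) ⁻¹' A) := by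
    rw [timeSigma_singleton]
    exact ⟨A, hA, rfl⟩
  have hbound := QuasiIndep.condExp_le_mul_condExp (hle T) (hle T') (hle _) (pow_nonneg hC 3)
    (h.quasiIndep_of_notMem hC hT) (h.quasiIndep_of_notMem hC hT') hA'
  rwa [← pow_mul] at hbound

end UEChain

section Blocks

variable {d : ℕ} {nn : Fin d → ℕ}

lemma blockLower_of_pos (nn : Fin d → ℕ) {s : Fin (d + 1)} (hs : 0 < (s : ℕ)) :
    blockLower nn s = nn ⟨(s : ℕ) - 1, by have := s.isLt; omega⟩ :=
  dif_pos hs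

lemma blockUpper_of_lt (nn : Fin d → ℕ) {s : Fin (d + 1)} (hs : (s : ℕ) < d) :
    blockUpper nn s = (nn ⟨(s : ℕ), hs⟩ : WithTop ℕ) :=
  dif_pos hs

lemma blockUpper_of_not_lt (nn : Fin d → ℕ) {s : Fin (d + 1)} (hs : ¬ (s : ℕ) < d) :
    blockUpper nn s = ⊤ :=
  dif_neg hs

/-- The times up to the left endpoint of the block `s`; empty for the first block. -/
def timesBefore (nn : Fin d → ℕ) (s : Fin (d + 1)) : Set ℕ :=
  {k | 0 < (s : ℕ) ∧ k ≤ blockLower nn s}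

/-- The times from the right endpoint of the block `s` on. -/
def timesAfter (nn : Fin d → ℕ) (s : Fin (d + 1)) : Set ℕ :=
  {k | blockUpper nn s ≤ (k : WithTop ℕ)}

/-- The left endpoint of the block `s`, as a set which is empty for the first block. -/
def leftEnd (nn : Fin d → ℕ) (s : Fin (d + 1)) : Set ℕ :=
  {k | 0 < (s : ℕ) ∧ k = blockLower nn s}

/-- The right endpoint of the block `s`, as a set which is empty for the last block. -/
def rightEnd (nn : Fin d → ℕ) (s : Fin (d + 1)) : Set ℕ :=
  {k | (k : WithTop ℕ) = blockUpper nn s}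

lemma blockLower_lt_of_mem_timesAfter (hmono : StrictMono nn) {s : Fin (d + 1)}
    (hs : 0 < (s : ℕ)) {k : ℕ} (hk : k ∈ timesAfter nn s) : blockLower nn s < k := by
  by_cases hd : (s : ℕ) < d
  · simp only [timesAfter, Set.mem_ofPred_eq, blockUpper_of_lt nn hd, Nat.cast_le] at hk
    rw [blockLower_of_pos nn hs]
    exact (hmono (Fin.mk_lt_mk.2 (by omega))).trans_le hk
  · simp [timesAfter, blockUpper_of_not_lt nn hd] at hk

lemma range_subset_timesBefore_union_timesAfter (hmono : StrictMono nn) (s : Fin (d + 1)) :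
    Set.range nn ⊆ timesBefore nn s ∪ timesAfter nn s := by
  rintro _ ⟨i, rfl⟩
  rcases lt_or_ge (i : ℕ) (s : ℕ) with hi | hi
  · refine Or.inl ⟨by omega, ?_⟩
    rw [blockLower_of_pos nn (by omega)]
    exact hmono.monotone (Fin.le_def.2 (by simp only; omega))
  · refine Or.inr ?_
    rw [timesAfter, Set.mem_ofPred_eq, blockUpper_of_lt nn (by omega), Nat.cast_le]
    exact hmono.monotone (Fin.le_def.2 hi)

lemma blockSet_subset_timesBefore_union_timesAfter (hmono : StrictMono nn) {s t : Fin (d + 1)}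
    (hst : t ≠ s) : blockSet nn t ⊆ timesBefore nn s ∪ timesAfter nn s := by
  rintro k ⟨hk, hk'⟩
  rcases lt_or_gt_of_ne (Fin.val_ne_of_ne hst) with hlt | hlt
  · refine Or.inl ⟨by omega, ?_⟩
    rw [blockUpper_of_lt nn (by omega), Nat.cast_lt] at hk'
    rw [blockLower_of_pos nn (by omega)]
    exact hk'.le.trans (hmono.monotone (Fin.le_def.2 (by simp only; omega)))
  · refine Or.inr ?_
    rw [blockLower_of_pos nn (by omega)] at hk
    rw [timesAfter, Set.mem_ofPred_eq, blockUpper_of_lt nn (by omega), Nat.cast_le]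
    exact (hmono.monotone (Fin.le_def.2 (by simp only; omega))).trans hk.le

lemma leftEnd_subset_timesBefore (nn : Fin d → ℕ) (s : Fin (d + 1)) :
    leftEnd nn s ⊆ timesBefore nn s :=
  fun _ hk => ⟨hk.1, hk.2.le⟩

lemma rightEnd_subset_timesAfter (nn : Fin d → ℕ) (s : Fin (d + 1)) :
    rightEnd nn s ⊆ timesAfter nn s :=
  fun _ hk => hk.ge

lemma leftEnd_union_rightEnd_subset_range (nn : Fin d → ℕ) (s : Fin (d + 1)) :
    leftEnd nn s ∪ rightEnd nn s ⊆ Set.range nn := by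
  rintro k (⟨hs, rfl⟩ | hk)
  · exact ⟨_, (blockLower_of_pos nn hs).symm⟩
  · by_cases hd : (s : ℕ) < d
    · rw [rightEnd, Set.mem_ofPred_eq, blockUpper_of_lt nn hd, Nat.cast_inj] at hk
      exact ⟨_, hk.symm⟩
    · simp [rightEnd, blockUpper_of_not_lt nn hd] at hk

lemma notMem_range_of_mem_blockSet (hmono : StrictMono nn) {s : Fin (d + 1)} {k : ℕ}
    (hk : k ∈ blockSet nn s) : k ∉ Set.range nn := fun hr => by
  rcases range_subset_timesBefore_union_timesAfter hmono s hr with h | h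
  · exact absurd hk.1 (not_lt.2 h.2)
  · exact absurd hk.2 (not_lt.2 h)

end Blocks

namespace UEChain

variable {d : ℕ} {nn : Fin d → ℕ}

lemma screensOff_timesBefore (h : UEChain μ X κ C) (hmono : StrictMono nn) (s : Fin (d + 1)) :
    ScreensOff μ (timeSigma X (leftEnd nn s)) (timeSigma X (timesBefore nn s))
      (blockSigma X nn s ⊔ timeSigma X (timesAfter nn s)) := by
  have : IsProbabilityMeasure μ := h.1
  have hle := timeSigma_le h.2.1
  by_cases hs : 0 < (s : ℕ)
  · have hend : leftEnd nn s = {blockLower nn s} := by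
      ext k
      simp [leftEnd, hs]
    rw [hend]
    exact ((h.screensOff_past_future (blockLower nn s)).mono_left (le_sup_of_le_right
      (timeSigma_mono X fun k hk => hk.2))).mono_right (le_sup_of_le_right (sup_le
        (timeSigma_mono X fun k hk => hk.1.le)
        (timeSigma_mono X fun k hk => (blockLower_lt_of_mem_timesAfter hmono hs hk).le)))
  · exact ScreensOff.of_left_le (timeSigma_mono X fun k hk => absurd hk.1 hs) (hle _)
      (sup_le (hle _) (hle _))

lemma screensOff_timesAfter (h : UEChain μ X κ C) (hmono : StrictMono nn) (s : Fin (d + 1)) :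
    ScreensOff μ (timeSigma X (rightEnd nn s)) (timeSigma X (timesAfter nn s))
      (blockSigma X nn s ⊔ timeSigma X (timesBefore nn s)) := by
  have : IsProbabilityMeasure μ := h.1
  have hle := timeSigma_le h.2.1
  by_cases hd : (s : ℕ) < d
  · set b := nn ⟨s, hd⟩
    have hU : blockUpper nn s = (b : WithTop ℕ) := blockUpper_of_lt nn hd
    have hend : rightEnd nn s = {b} := by
      ext k
      simp [rightEnd, hU]
    have hb : b ∈ timesAfter nn s := hU.le
    rw [hend]
    refine ((h.screensOff_past_future b).symm.mono_left (le_sup_of_le_right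
      (timeSigma_mono X fun k hk => ?_))).mono_right (le_sup_of_le_right (sup_le
        (timeSigma_mono X fun k hk => ?_) (timeSigma_mono X fun k hk =>
          hk.2.trans (blockLower_lt_of_mem_timesAfter hmono hk.1 hb).le)))
    · rwa [timesAfter, Set.mem_ofPred_eq, hU, Nat.cast_le] at hk
    · have hk' := hk.2
      rw [hU, Nat.cast_lt] at hk'
      exact hk'.le
  · refine ScreensOff.of_left_le (timeSigma_mono X fun k hk => ?_) (hle _)
      (sup_le (hle _) (hle _))
    simp [timesAfter, blockUpper_of_not_lt nn hd] at hk

lemma screensOff_block (h : UEChain μ X κ C) (hmono : StrictMono nn) (s : Fin (d + 1)) :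
    ScreensOff μ (timeSigma X (Set.range nn)) (blockSigma X nn s)
      (⨆ t ≠ s, blockSigma X nn t) := by
  have : IsProbabilityMeasure μ := h.1
  have hends := timeSigma_mono X (leftEnd_union_rightEnd_subset_range nn s)
  have hrange := timeSigma_mono X (range_subset_timesBefore_union_timesAfter hmono s)
  rw [timeSigma_union] at hends hrange
  refine (ScreensOff.of_endpoints (timeSigma_mono X (leftEnd_subset_timesBefore nn s))
    (timeSigma_mono X (rightEnd_subset_timesAfter nn s)) (h.screensOff_timesBefore hmono s)
    (h.screensOff_timesAfter hmono s) hends hrange).mono_right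
    (le_sup_of_le_right (iSup₂_le fun t ht => ?_))
  rw [← timeSigma_union]
  exact timeSigma_mono X (blockSet_subset_timesBefore_union_timesAfter hmono ht)

end UEChain

end Chain

end EdgeworthMC

namespace EdgeworthMC

variable {Ω E : Type*} [MeasurableSpace Ω] [MeasurableSpace E]

/-- Lemma 3.9, conditional chains. Write `𝓑 = {n₁ < ⋯ < n_d} ⊆ {1,…,N}`,
`n₀ = 0`, `n_{d+1} = ∞`, and let `𝓔 = σ(X_n : n ∈ 𝓑)`. Then:
(i) the blocks `{X_n : n_s < n < n_{s+1}}`, `s = 0,…,d`, are conditionally independent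
given `𝓔` (products of bounded block-measurable functions factorize under `𝔼[· | 𝓔]`); and
(ii) if `n` and `n+1` lie in the same block then the conditional transition probabilities
given `𝓔` are uniformly elliptic with constant `C⁶`:
`C⁻⁶ ℙ(X_{n+1} ∈ A | 𝓔) ≤ ℙ(X_{n+1} ∈ A | X_n, 𝓔) ≤ C⁶ ℙ(X_{n+1} ∈ A | 𝓔)` a.s.,
i.e. the conditional transition densities satisfy `C⁻⁶ ≤ p_{n,𝓔}(x,y) ≤ C⁶`. -/
theorem conditional_chain
    (μ : Measure Ω) (X : ℕ → Ω → E) (κ : ℕ → Kernel E E)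
    (C : ℝ) (hC : 1 < C) (hchain : UEChain μ X κ C)
    (N d : ℕ) (nn : Fin d → ℕ) (hmono : StrictMono nn)
    (hrange : ∀ i, nn i ∈ Finset.Icc 1 N) :
    -- (i) conditional independence of the blocks given `𝓔`
    (∀ g : Fin (d + 1) → Ω → ℝ,
      (∀ s, Measurable[blockSigma X nn s] (g s)) →
      (∀ s, ∃ B, ∀ ω, |g s ω| ≤ B) →
      (μ[fun ω => ∏ s, g s ω | ⨆ i : Fin d, MeasurableSpace.comap (X (nn i))
          (inferInstance : MeasurableSpace E)]
        =ᵐ[μ] fun ω => ∏ s, (μ[g s | ⨆ i : Fin d, MeasurableSpace.comap (X (nn i))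
          (inferInstance : MeasurableSpace E)]) ω)) ∧
    -- (ii) conditional uniform ellipticity with constant `C⁶` inside each block
    (∀ n : ℕ, (∃ s, n ∈ blockSet nn s ∧ n + 1 ∈ blockSet nn s) →
      ∀ A : Set E, MeasurableSet A →
        ∀ᵐ ω ∂μ,
          (μ[fun ω' => A.indicator (fun _ => (1 : ℝ)) (X (n + 1) ω') |
              (⨆ i : Fin d, MeasurableSpace.comap (X (nn i))
                (inferInstance : MeasurableSpace E)) ⊔
              MeasurableSpace.comap (X n) (inferInstance : MeasurableSpace E)]) ω
            ≤ C ^ 6 * (μ[fun ω' => A.indicator (fun _ => (1 : ℝ)) (X (n + 1) ω') |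
              ⨆ i : Fin d, MeasurableSpace.comap (X (nn i))
                (inferInstance : MeasurableSpace E)]) ω ∧
          (μ[fun ω' => A.indicator (fun _ => (1 : ℝ)) (X (n + 1) ω') |
              ⨆ i : Fin d, MeasurableSpace.comap (X (nn i))
                (inferInstance : MeasurableSpace E)]) ω
            ≤ C ^ 6 * (μ[fun ω' => A.indicator (fun _ => (1 : ℝ)) (X (n + 1) ω') |
              (⨆ i : Fin d, MeasurableSpace.comap (X (nn i))
                (inferInstance : MeasurableSpace E)) ⊔
              MeasurableSpace.comap (X n) (inferInstance : MeasurableSpace E)]) ω) := by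
  have hprob : IsProbabilityMeasure μ := hchain.1
  have hC0 : 0 ≤ C := zero_le_one.trans hC.le
  refine ⟨fun g hg hb => ?_, fun n ⟨s, _, hns⟩ A hA => ?_⟩
  · have hprod := condExp_prod_of_screensOff (timeSigma_le hchain.2.1 _)
      (hchain.screensOff_block hmono) hg hb Finset.univ
    rw [timeSigma_range] at hprod
    simpa only [Finset.prod_fn] using hprod
  · have hn : n + 1 ∉ Set.range nn := notMem_range_of_mem_blockSet hmono hns
    have hn' : n + 1 ∉ Set.range nn ∪ {n} := by
      simpa only [Set.mem_union, Set.mem_singleton_iff, n.succ_ne_self, or_false] using hn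
    rw [← timeSigma_range, ← timeSigma_singleton, ← timeSigma_union]
    filter_upwards [hchain.condExp_le_pow_six_mul_condExp hC0 hn' hn hA,
      hchain.condExp_le_pow_six_mul_condExp hC0 hn hn' hA] with ω hle hge using ⟨hle, hge⟩

end EdgeworthMC
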